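/- Let G = S_n with n a positive integer, n ≠ 6, let r be a ramification of G, and fix a map u_0 from the conjugacy classes of G to G with u_0(C) ∈ C for every class C. Then: (a) every ramification system with characters RSC(G, r, χ⃗, u) with ramification r is isomorphic to RSC(G, r, χ⃗', u_0) for some character data χ⃗'; and (b) two such systems RSC(G, r, χ⃗', u_0) and RSC(G, r, χ⃗'', u_0) are isomorphic if and only if for each C ∈ K_r(G) the multiset {χ'_C^{(i)} : 1 ≤ i ≤ r_C} equals the multiset {χ''_C^{(i)} : 1 ≤ i ≤ r_C}. Consequently, the isomorphism classes of RSCs of G with ramification r are in bijection with the families, indexed by C ∈ K_r(G), of multisets of size r_C of characters of Z_{u_0(C)}. -/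

import Mathlib

/-- A ramification system with characters `RSC(G, r, χ⃗, u)` on a group `G`:
a ramification `r` assigning a nonnegative integer `r C` to each conjugacy class `C`
of `G`; a map `u` from conjugacy classes to `G` with `u C ∈ C`; and, for each
conjugacy class `C`, an `r C`-tuple of characters of the centralizer `Z_{u C}`
(one-dimensional representations, i.e. group homomorphisms `Z_{u C} → ℂˣ`).
For classes with `r C = 0` the tuple of characters is empty, so `χ` carries
information exactly for the classes in `K_r(G) = {C : r C ≠ 0}`. -/
structure RSC (G : Type*) [Group G] where
  /-- the ramification -/
  r : ConjClasses G → ℕ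
  /-- a choice of representative of each conjugacy class -/
  u : ConjClasses G → G
  hu : ∀ C : ConjClasses G, ConjClasses.mk (u C) = C
  /-- the tuple of characters of `Z_{u C}` attached to each conjugacy class `C` -/
  chi : ∀ C : ConjClasses G, Fin (r C) →
    (Subgroup.centralizer ({u C} : Set G) →* ℂˣ)

/-- Isomorphism of ramification systems with characters (over the same group `G`),
following the definition of the paper: `RSC(G, r, χ⃗, u) ≅ RSC(G, r', χ⃗', u')` if there
are a group automorphism `φ` of `G`, for each conjugacy class `C` an element `h_C ∈ G`
with `φ(h_C u(C) h_C⁻¹) = u'(φ(C))`, and for each `C ∈ K_r(G)` a bijection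
`φ_C : I_C(r) ≃ I_{φ(C)}(r')` such that
`χ'_{φ(C)}^{(φ_C(i))}(φ(h_C h h_C⁻¹)) = χ_C^{(i)}(h)` for all `h ∈ Z_{u(C)}` and
all `i`. -/
def RSC.Iso {G : Type*} [Group G] (A B : RSC G) : Prop :=
  ∃ φ : G ≃* G,
    ∀ C : ConjClasses G, ∃ h : G,
      φ (h * A.u C * h⁻¹) = B.u (ConjClasses.map (φ : G →* G) C) ∧
      (A.r C ≠ 0 →
        ∃ e : Fin (A.r C) ≃ Fin (B.r (ConjClasses.map (φ : G →* G) C)),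
          ∀ (i : Fin (A.r C)) (x : G)
            (hx : x ∈ Subgroup.centralizer ({A.u C} : Set G))
            (hx' : φ (h * x * h⁻¹) ∈
              Subgroup.centralizer ({B.u (ConjClasses.map (φ : G →* G) C)} : Set G)),
            B.chi (ConjClasses.map (φ : G →* G) C) (e i) ⟨φ (h * x * h⁻¹), hx'⟩ =
              A.chi C i ⟨x, hx⟩)

/-! Conjugation carries the characters of `Z_a` to those of `Z_b`, and because a character is
invariant under inner automorphisms of `Z_a`, the result does not depend on the conjugating element.
If every automorphism of `G` is inner, hence fixes every conjugacy class, then an isomorphism of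
ramification systems with the same `r` is just a matching of the tuples after transport to the
centralizers of `u₀ C`, so the multisets of transported characters classify the systems.

Every automorphism of `Perm α` is inner when `card α ≠ 6`: a product of `k` disjoint transpositions
has a centralizer of order `2 ^ k * k! * (card α - 2 * k)!`, which for `card α ≠ 6` singles out
`k = 1`. So automorphisms preserve transpositions, and the images of the transpositions `(o i)` all
move a common point `a`; sending `i` to the other point moved defines the conjugating permutation.
-/

section Multiset

variable {X ι κ : Type*} [Fintype ι] [Fintype κ]

theorem count_map_univ_val [DecidableEq X] (f : ι → X) (x : X) :
    (Finset.univ.val.map f).count x = Nat.card {i // f i = x} := by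
  simp [Multiset.count_map, Fintype.card_subtype, Finset.card_def, eq_comm]

theorem map_univ_val_eq_iff_card_fiber_eq {f : ι → X} {g : κ → X} :
    Finset.univ.val.map f = Finset.univ.val.map g ↔
      ∀ x, Nat.card {i // f i = x} = Nat.card {j // g j = x} := by
  classical
  simp only [Multiset.ext, count_map_univ_val]

theorem map_univ_val_eq_iff_exists_equiv {f : ι → X} {g : κ → X} :
    Finset.univ.val.map f = Finset.univ.val.map g ↔ ∃ e : ι ≃ κ, ∀ i, g (e i) = f i := by
  constructor
  · intro h
    rw [map_univ_val_eq_iff_card_fiber_eq] at h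
    have E (x : X) := (Finite.card_eq.1 (h x)).some
    exact ⟨Equiv.ofFiberEquiv E, Equiv.ofFiberEquiv_map E⟩
  · rintro ⟨e, he⟩
    rw [← Multiset.map_univ_val_equiv e, Multiset.map_map]
    exact Multiset.map_congr rfl fun i _ => (he i).symm

theorem exists_fin_map_univ_val_eq {n : ℕ} (s : Multiset X) (hs : s.card = n) :
    ∃ f : Fin n → X, Finset.univ.val.map f = s := by
  obtain ⟨l, rfl⟩ : ∃ l : List X, ↑l = s := Quot.exists_rep s
  obtain rfl : l.length = n := hs
  exact ⟨l.get, by rw [Fin.univ_val_map, List.ofFn_get]⟩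

end Multiset

section Centralizer

open Subgroup

variable {G H M : Type*} [Group G] [Group H] [CommGroup M] {a b c : G}

/-- The isomorphism `Z_a ≃ Z_b` induced by an isomorphism of groups that sends `a` to `b`. -/
def centralizerCongr (φ : G ≃* H) {a : G} {b : H} (h : φ a = b) :
    centralizer {a} ≃* centralizer {b} where
  toEquiv := φ.toEquiv.subtypeEquiv fun x => by
    simp [mem_centralizer_singleton_iff, ← h, ← map_mul]
  map_mul' x y := Subtype.ext (map_mul φ x.1 y.1)

theorem nat_card_centralizer_apply (φ : G ≃* H) (a : G) :
    Nat.card (centralizer {φ a}) = Nat.card (centralizer {a}) :=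
  (Nat.card_congr (centralizerCongr φ rfl).toEquiv).symm

/-- Transport of characters from `Z_a` to `Z_b` along conjugation by some `k` with `k a k⁻¹ = b`.
The choice of `k` is immaterial by `transportCharacter_apply`. -/
noncomputable def transportCharacter (h : IsConj a b) :
    (centralizer {a} →* M) ≃ (centralizer {b} →* M) :=
  (centralizerCongr (MulAut.conj (isConj_iff.1 h).choose)
    (isConj_iff.1 h).choose_spec).monoidHomCongrLeftEquiv

theorem conj_mem_centralizer {k x : G} (hk : k * a * k⁻¹ = b) (hx : x ∈ centralizer {a}) :
    k * x * k⁻¹ ∈ centralizer {b} :=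
  (centralizerCongr (MulAut.conj k) hk ⟨x, hx⟩).2

theorem transportCharacter_apply (h : IsConj a b) {k : G} (hk : k * a * k⁻¹ = b)
    (χ : centralizer {a} →* M) (x : G) (hx : x ∈ centralizer {a})
    (hx' : k * x * k⁻¹ ∈ centralizer {b}) :
    transportCharacter h χ ⟨k * x * k⁻¹, hx'⟩ = χ ⟨x, hx⟩ := by
  set l := (isConj_iff.1 h).choose
  have hlb : l * a * l⁻¹ = b := (isConj_iff.1 h).choose_spec
  have hw : l⁻¹ * k ∈ centralizer {a} := by
    rw [mem_centralizer_singleton_iff]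
    calc l⁻¹ * k * a = l⁻¹ * (k * a * k⁻¹) * k := by group
      _ = a * (l⁻¹ * k) := by rw [hk, ← hlb]; group
  have conj_eq : (centralizerCongr (MulAut.conj l) hlb).symm ⟨k * x * k⁻¹, hx'⟩ =
      (⟨l⁻¹ * k, hw⟩ * ⟨x, hx⟩ * ⟨l⁻¹ * k, hw⟩⁻¹ : centralizer {a}) := by
    rw [MulEquiv.symm_apply_eq]
    ext
    change k * x * k⁻¹ = l * (l⁻¹ * k * x * (l⁻¹ * k)⁻¹) * l⁻¹
    group
  change χ ((centralizerCongr (MulAut.conj l) hlb).symm ⟨k * x * k⁻¹, hx'⟩) = _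
  rw [conj_eq, map_mul, map_mul, map_inv, mul_inv_cancel_comm]

theorem transportCharacter_self (h : IsConj a a) (χ : centralizer {a} →* M) :
    transportCharacter h χ = χ := by
  ext1 x
  simpa using transportCharacter_apply h (k := 1) (by simp) χ x.1 x.2 (by simp)

theorem eq_transportCharacter_iff (h : IsConj a b) {k : G} (hk : k * a * k⁻¹ = b)
    {χ : centralizer {a} →* M} {ψ : centralizer {b} →* M} :
    ψ = transportCharacter h χ ↔ ∀ (x : G) (hx : x ∈ centralizer {a})
      (hx' : k * x * k⁻¹ ∈ centralizer {b}), ψ ⟨k * x * k⁻¹, hx'⟩ = χ ⟨x, hx⟩ := by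
  constructor
  · rintro rfl x hx hx'
    exact transportCharacter_apply h hk χ x hx hx'
  · intro H
    ext1 y
    obtain ⟨⟨x, hx⟩, rfl⟩ := (centralizerCongr (MulAut.conj k) hk).surjective y
    have hx' := conj_mem_centralizer hk hx
    exact (H x hx hx').trans (transportCharacter_apply h hk χ x hx hx').symm

theorem transportCharacter_trans (hab : IsConj a b) (hbc : IsConj b c) (χ : centralizer {a} →* M) :
    transportCharacter hbc (transportCharacter hab χ) = transportCharacter (hab.trans hbc) χ := by
  obtain ⟨k, hk⟩ := isConj_iff.1 hab
  obtain ⟨l, hl⟩ := isConj_iff.1 hbc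
  have hlk : l * k * a * (l * k)⁻¹ = c := by rw [← hl, ← hk]; group
  rw [eq_transportCharacter_iff _ hlk]
  intro x hx hx'
  have hx'' := conj_mem_centralizer hk hx
  rw [← transportCharacter_apply hab hk χ x hx hx'',
    ← transportCharacter_apply hbc hl _ _ hx'' (conj_mem_centralizer hl hx'')]
  congr 2
  group

end Centralizer

theorem conjClasses_map_mulAutConj {G : Type*} [Group G] (g : G) (C : ConjClasses G) :
    C.map (MulAut.conj g : G →* G) = C := by
  obtain ⟨x, rfl⟩ := ConjClasses.mk_surjective C
  exact ConjClasses.mk_eq_mk_iff_isConj.2 (isConj_iff.2 ⟨g, rfl⟩).symm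

namespace RSC

variable {G : Type*} [Group G] {u₀ : ConjClasses G → G}

theorem isConj_u (A : RSC G) (hu₀ : ∀ C, ConjClasses.mk (u₀ C) = C) (C : ConjClasses G) :
    IsConj (A.u C) (u₀ C) :=
  ConjClasses.mk_eq_mk_iff_isConj.1 ((A.hu C).trans (hu₀ C).symm)

/-- The characters attached to each class `C`, transported to `Z_{u₀ C}` and with their order in the
tuple forgotten. -/
noncomputable def charMultiset (A : RSC G) (hu₀ : ∀ C, ConjClasses.mk (u₀ C) = C)
    (C : ConjClasses G) : Multiset (Subgroup.centralizer {u₀ C} →* ℂˣ) :=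
  Finset.univ.val.map fun i => transportCharacter (A.isConj_u hu₀ C) (A.chi C i)

@[simp]
theorem card_charMultiset (A : RSC G) (hu₀ : ∀ C, ConjClasses.mk (u₀ C) = C) (C : ConjClasses G) :
    (A.charMultiset hu₀ C).card = A.r C := by
  simp [charMultiset]

theorem exists_charMultiset_eq (hu₀ : ∀ C, ConjClasses.mk (u₀ C) = C) {r : ConjClasses G → ℕ}
    (f : ∀ C, Multiset (Subgroup.centralizer {u₀ C} →* ℂˣ)) (hf : ∀ C, (f C).card = r C) :
    ∃ A : RSC G, A.r = r ∧ A.u = u₀ ∧ A.charMultiset hu₀ = f := by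
  choose χ hχ using fun C => exists_fin_map_univ_val_eq (f C) (hf C)
  refine ⟨⟨r, u₀, hu₀, χ⟩, rfl, rfl, funext fun C => ?_⟩
  simp only [charMultiset, transportCharacter_self]
  exact hχ C

theorem charMultiset_eq_iff_exists_equiv {A B : RSC G} (hu₀ : ∀ C, ConjClasses.mk (u₀ C) = C)
    {C : ConjClasses G} :
    A.charMultiset hu₀ C = B.charMultiset hu₀ C ↔ ∃ e : Fin (A.r C) ≃ Fin (B.r C),
      ∀ i, B.chi C (e i) = transportCharacter (A.isConj_u B.hu C) (A.chi C i) := by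
  simp only [charMultiset, map_univ_val_eq_iff_exists_equiv,
    ← transportCharacter_trans (A.isConj_u B.hu C) (B.isConj_u hu₀ C),
    EmbeddingLike.apply_eq_iff_eq]

theorem iso_of_charMultiset_eq {A B : RSC G} (hu₀ : ∀ C, ConjClasses.mk (u₀ C) = C)
    (h : A.charMultiset hu₀ = B.charMultiset hu₀) : A.Iso B := by
  have map_refl (C : ConjClasses G) : C.map (MulEquiv.refl G : G →* G) = C := by
    obtain ⟨x, rfl⟩ := ConjClasses.mk_surjective C
    rfl
  refine ⟨MulEquiv.refl G, fun C => ?_⟩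
  obtain ⟨k, hk⟩ := isConj_iff.1 (A.isConj_u B.hu C)
  obtain ⟨e, he⟩ := (charMultiset_eq_iff_exists_equiv hu₀).1 (congrFun h C)
  rw [map_refl]
  exact ⟨k, hk, fun _ => ⟨e, fun i => (eq_transportCharacter_iff _ hk).1 (he i)⟩⟩

theorem Iso.charMultiset_eq {A B : RSC G} (hG : Function.Surjective (MulAut.conj : G →* MulAut G))
    (hu₀ : ∀ C, ConjClasses.mk (u₀ C) = C) (hr : A.r = B.r) (h : A.Iso B) :
    A.charMultiset hu₀ = B.charMultiset hu₀ := by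
  obtain ⟨φ, H⟩ := h
  obtain ⟨g, rfl⟩ := hG φ
  funext C
  obtain ⟨k, hk, H⟩ := H C
  rw [conjClasses_map_mulAutConj] at hk H
  rw [charMultiset_eq_iff_exists_equiv]
  have conj_eq (x : G) : MulAut.conj g (k * x * k⁻¹) = g * k * x * (g * k)⁻¹ := by
    simp [mul_assoc]
  rcases eq_or_ne (A.r C) 0 with h0 | h0
  · have : IsEmpty (Fin (A.r C)) := by rw [h0]; infer_instance
    exact ⟨finCongr (congrFun hr C), isEmptyElim⟩
  · obtain ⟨e, he⟩ := H h0
    rw [conj_eq] at hk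
    simp only [conj_eq] at he
    exact ⟨e, fun i => (eq_transportCharacter_iff _ hk).2 (he i)⟩

theorem iso_iff_charMultiset_eq {A B : RSC G}
    (hG : Function.Surjective (MulAut.conj : G →* MulAut G))
    (hu₀ : ∀ C, ConjClasses.mk (u₀ C) = C) (hr : A.r = B.r) :
    A.Iso B ↔ A.charMultiset hu₀ = B.charMultiset hu₀ :=
  ⟨Iso.charMultiset_eq hG hu₀ hr, iso_of_charMultiset_eq hu₀⟩

theorem transportCharacter_chi_eq_iff {A : RSC G} (hu₀ : ∀ C, ConjClasses.mk (u₀ C) = C)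
    (hA : A.u = u₀) {C : ConjClasses G} {i : Fin (A.r C)}
    {ξ : Subgroup.centralizer {u₀ C} →* ℂˣ} :
    transportCharacter (A.isConj_u hu₀ C) (A.chi C i) = ξ ↔
      ∀ (x : G) (hx : x ∈ Subgroup.centralizer {u₀ C}) (hx' : x ∈ Subgroup.centralizer {A.u C}),
        A.chi C i ⟨x, hx'⟩ = ξ ⟨x, hx⟩ := by
  subst hA
  rw [transportCharacter_self, DFunLike.ext_iff, Subtype.forall]
  exact forall_congr' fun x => ⟨fun h hx _ => h hx, fun h hx => h hx hx⟩

theorem charMultiset_eq_iff_card_eq {A B : RSC G} (hu₀ : ∀ C, ConjClasses.mk (u₀ C) = C)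
    (hA : A.u = u₀) (hB : B.u = u₀) (hr : A.r = B.r) :
    A.charMultiset hu₀ = B.charMultiset hu₀ ↔
      ∀ C, A.r C ≠ 0 → ∀ ξ : Subgroup.centralizer {u₀ C} →* ℂˣ,
        Nat.card {i : Fin (A.r C) // ∀ (x : G) (hx : x ∈ Subgroup.centralizer {u₀ C})
          (hx' : x ∈ Subgroup.centralizer {A.u C}), A.chi C i ⟨x, hx'⟩ = ξ ⟨x, hx⟩} =
        Nat.card {j : Fin (B.r C) // ∀ (x : G) (hx : x ∈ Subgroup.centralizer {u₀ C})
          (hx' : x ∈ Subgroup.centralizer {B.u C}), B.chi C j ⟨x, hx'⟩ = ξ ⟨x, hx⟩} := by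
  rw [funext_iff]
  refine forall_congr' fun C => ?_
  simp only [← transportCharacter_chi_eq_iff hu₀ hA, ← transportCharacter_chi_eq_iff hu₀ hB]
  rw [charMultiset, charMultiset, map_univ_val_eq_iff_card_fiber_eq]
  refine ⟨fun h _ => h, fun h => ?_⟩
  rcases eq_or_ne (A.r C) 0 with h0 | h0
  · have : IsEmpty (Fin (A.r C)) := by rw [h0]; infer_instance
    have : IsEmpty (Fin (B.r C)) := by rw [← hr, h0]; infer_instance
    simp
  · exact h h0

end RSC

section SymmetricGroup

open Equiv Equiv.Perm Subgroup
open scoped Nat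

theorem two_pow_mul_factorial_lt_factorial {k : ℕ} (hk : 2 ≤ k) :
    2 ^ (k + 1) * (k + 2)! < (2 * k + 2)! := by
  induction k, hk using Nat.le_induction with
  | base => decide
  | succ k _ ih =>
    calc 2 ^ (k + 2) * (k + 3)! = 2 * (k + 3) * (2 ^ (k + 1) * (k + 2)!) := by
          rw [pow_succ, Nat.factorial_succ (k + 2)]; ring
      _ < (2 * k + 4) * (2 * k + 3) * (2 * k + 2)! :=
          Nat.mul_lt_mul_of_le_of_lt (by nlinarith) ih (by positivity)
      _ = (2 * (k + 1) + 2)! := by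
          rw [mul_add_one, Nat.factorial_succ (2 * k + 3), Nat.factorial_succ (2 * k + 2)]; ring

theorem factorial_mul_two_pow_mul_factorial_ne (k m : ℕ) (h : ¬ (k = 1 ∧ m = 0)) :
    m ! * (2 ^ (k + 1) * (k + 2)!) ≠ (2 * k + 2 + m)! := by
  have hm := m.factorial_pos
  match k with
  | 0 =>
    have : (2 * 0 + 2 + m)! = m ! * ((m + 2) * (m + 1)) := by
      rw [mul_zero, zero_add, add_comm, Nat.factorial_succ, Nat.factorial_succ]; ring
    rw [this, Ne, Nat.mul_right_inj hm.ne']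
    change 4 ≠ _
    rcases m with _ | _ | m <;> grind
  | 1 =>
    have : (2 * 1 + 2 + m)! = m ! * ((m + 4) * (m + 3) * (m + 2) * (m + 1)) := by
      rw [mul_one, add_comm]; simp only [Nat.factorial_succ]; ring
    rw [this, Ne, Nat.mul_right_inj hm.ne']
    change 24 ≠ _
    rcases m with _ | m
    · simp at h
    · have : 5 * 4 * 3 * 2 ≤ (m + 1 + 4) * (m + 1 + 3) * (m + 1 + 2) * (m + 1 + 1) := by
        gcongr <;> omega
      omega
  | k + 2 =>
    refine ne_of_lt ?_
    calc _ < m ! * (2 * (k + 2) + 2)! :=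
          Nat.mul_lt_mul_of_pos_left (two_pow_mul_factorial_lt_factorial (by omega)) hm
      _ ≤ _ := by
          rw [mul_comm]
          exact Nat.le_of_dvd (Nat.factorial_pos _)
            (Nat.factorial_mul_factorial_dvd_factorial_add _ _)

theorem eq_one_or_eq_six_of_factorial_eq {n k : ℕ} (hk : k ≠ 0) (hkn : k * 2 ≤ n)
    (h : (n - k * 2)! * 2 ^ k * k ! = (n - 2)! * 2) : k = 1 ∨ n = 6 := by
  obtain ⟨m, rfl⟩ := Nat.exists_eq_add_of_le hkn
  match k with
  | 1 => exact .inl rfl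
  | k + 2 =>
    by_contra! hne
    refine factorial_mul_two_pow_mul_factorial_ne k m (by omega) ?_
    rw [Nat.add_sub_cancel_left, show (k + 2) * 2 + m - 2 = 2 * k + 2 + m by omega] at h
    rw [pow_succ] at h
    linarith

section Fintype

variable {α : Type*} [Fintype α] [DecidableEq α] {σ τ : Perm α}

theorem nat_card_centralizer_of_cycleType_eq_replicate {k p : ℕ}
    (h : σ.cycleType = Multiset.replicate k p) :
    Nat.card (centralizer {σ}) = (Fintype.card α - k * p)! * p ^ k * k ! := by
  rw [nat_card_centralizer, h, Multiset.sum_replicate, Multiset.prod_replicate, smul_eq_mul,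
    Multiset.toFinset_replicate]
  split_ifs with hk
  · simp [hk]
  · simp

theorem isSwap_of_nat_card_centralizer_eq (hα : Fintype.card α ≠ 6) (hσ : orderOf σ = 2)
    (hτ : τ.IsSwap) (h : Nat.card (centralizer {σ}) = Nat.card (centralizer {τ})) :
    σ.IsSwap := by
  obtain ⟨k, hk⟩ := cycleType_prime_order (hσ ▸ Nat.prime_two)
  rw [hσ] at hk
  rw [isSwap_iff_cycleType] at hτ ⊢
  have hle : (k + 1) * 2 ≤ Fintype.card α := by
    simpa only [hk, Multiset.sum_replicate, smul_eq_mul] using σ.sum_cycleType_le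
  rw [nat_card_centralizer_of_cycleType_eq_replicate hk,
    nat_card_centralizer_of_cycleType_eq_replicate (k := 1) hτ] at h
  have hk1 : k + 1 = 1 :=
    (eq_one_or_eq_six_of_factorial_eq k.succ_ne_zero hle (by simpa using h)).resolve_right hα
  rw [hk, hk1, Multiset.replicate_one]

theorem isSwap_mulEquiv_apply (hα : Fintype.card α ≠ 6) (f : Perm α ≃* Perm α) (hσ : σ.IsSwap) :
    (f σ).IsSwap :=
  isSwap_of_nat_card_centralizer_eq hα ((MulEquiv.orderOf_eq f σ).trans hσ.orderOf) hσ
    (nat_card_centralizer_apply f σ)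

end Fintype

variable {α : Type*} [DecidableEq α]

theorem isSwap_eq_swap_apply {σ : Perm α} {a : α} (hσ : σ.IsSwap) (ha : σ a ≠ a) :
    σ = swap a (σ a) := by
  obtain ⟨x, y, -, rfl⟩ := hσ
  rcases (swap_apply_ne_self_iff.1 ha).2 with rfl | rfl
  · rw [swap_apply_left]
  · rw [swap_apply_right, swap_comm]

theorem not_commute_swap {o i j : α} (hi : i ≠ o) (hj : j ≠ o) (hij : i ≠ j) :
    ¬ Commute (swap o i) (swap o j) := by
  intro h
  have := congr($(h.eq) o)
  simp only [Perm.mul_apply, swap_apply_left, swap_apply_of_ne_of_ne hi hij,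
    swap_apply_of_ne_of_ne hj hij.symm] at this
  exact hij this.symm

/- Pairwise intersecting two-element sets without a common point form a triangle `{a, b}, {a, c},
{b, c}`, which `htri` excludes: conjugating `swap a c` by `swap a b` gives `swap b c`. -/
theorem exists_forall_apply_ne_of_isSwap [Nonempty α] {ι : Type*} {τ : ι → Perm α}
    (hswap : ∀ i, (τ i).IsSwap) (hcomm : ∀ i j, i ≠ j → ¬ Commute (τ i) (τ j))
    (htri : ∀ i j k, i ≠ j → τ k ≠ τ i * τ j * τ i) :
    ∃ a, ∀ i, τ i a ≠ a := by
  rcases subsingleton_or_nontrivial ι with _ | _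
  · rcases isEmpty_or_nonempty ι with _ | ⟨⟨i⟩⟩
    · exact ⟨Classical.arbitrary α, isEmptyElim⟩
    · obtain ⟨a, b, hab, h⟩ := hswap i
      exact ⟨a, fun j => by simpa [Subsingleton.elim j i, h] using hab.symm⟩
  have exists_common_moved (i j : ι) (hij : i ≠ j) : ∃ x, τ i x ≠ x ∧ τ j x ≠ x := by
    have := mt Perm.Disjoint.commute (hcomm i j hij)
    simpa only [Perm.Disjoint, not_forall, not_or] using this
  obtain ⟨i, j, hij⟩ := exists_pair_ne ι
  obtain ⟨a, hia, hja⟩ := exists_common_moved i j hij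
  have moves_of_fixes (k l : ι) (hka : τ k a = a) (hla : τ l a ≠ a) : τ k (τ l a) ≠ τ l a := by
    obtain ⟨x, hkx, hlx⟩ := exists_common_moved k l (by rintro rfl; exact hla hka)
    rw [isSwap_eq_swap_apply (hswap l) hla] at hlx
    rcases (swap_apply_ne_self_iff.1 hlx).2 with rfl | rfl
    · exact absurd hka hkx
    · exact hkx
  refine ⟨a, fun k hka => ?_⟩
  have hi := isSwap_eq_swap_apply (hswap i) hia
  have hj := isSwap_eq_swap_apply (hswap j) hja
  have hk := isSwap_eq_swap_apply (hswap k) (moves_of_fixes k i hka hia)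
  have hkj := moves_of_fixes k j hka hja
  have hne : τ i a ≠ τ j a := fun h => hcomm i j hij (by rw [hi, hj, h])
  have hkij : τ k = swap (τ i a) (τ j a) := by
    rw [hk] at hkj
    rcases (swap_apply_ne_self_iff.1 hkj).2 with h | h
    · exact absurd h.symm hne
    · rwa [← h] at hk
  apply htri i j k hij
  rw [hkij, hi, hj, swap_apply_left, swap_apply_left, swap_comm a (τ j a),
    swap_mul_swap_mul_swap hja hne.symm]

theorem exists_perm_map_swap_eq [Finite α] (f : Perm α ≃* Perm α)
    (hf : ∀ σ, σ.IsSwap → (f σ).IsSwap) (o : α) :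
    ∃ g : Perm α, ∀ i, f (swap o i) = swap (g o) (g i) := by
  have : Nonempty α := ⟨o⟩
  obtain ⟨a, ha⟩ : ∃ a, ∀ i : {i // i ≠ o}, f (swap o i) a ≠ a := by
    refine exists_forall_apply_ne_of_isSwap (fun i => hf _ ⟨o, i, i.2.symm, rfl⟩)
      (fun i j hij h => ?_) (fun i j k hij h => ?_)
    · exact not_commute_swap i.2 j.2 (Subtype.coe_ne_coe.2 hij) ((commute_map_iff f.injective).1 h)
    · rw [← map_mul, ← map_mul] at h
      have := congr($(f.injective h) o)
      simp only [Perm.mul_apply, swap_apply_left,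
        swap_apply_of_ne_of_ne i.2 (Subtype.coe_ne_coe.2 hij), swap_apply_right] at this
      exact k.2 this
  have map_refl : f (Equiv.refl α) = Equiv.refl α := map_one f
  have map_swap (i : α) : f (swap o i) = swap a (f (swap o i) a) := by
    rcases eq_or_ne i o with rfl | hi
    · simp [map_refl]
    · exact isSwap_eq_swap_apply (hf _ ⟨o, i, hi.symm, rfl⟩) (ha ⟨i, hi⟩)
  have injective : Function.Injective fun i => f (swap o i) a := by
    intro i j hij
    have : swap o i = swap o j := f.injective <| by
      rw [map_swap i, map_swap j]
      exact congrArg (swap a) hij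
    exact swap_injective_of_left o this
  refine ⟨Equiv.ofBijective _ (Finite.injective_iff_bijective.1 injective), fun i => ?_⟩
  simpa [map_refl] using map_swap i

theorem monoidHom_eq_of_swap_eq [Finite α] {M : Type*} [Monoid M] {f g : Perm α →* M} (o : α)
    (h : ∀ i, f (swap o i) = g (swap o i)) : f = g := by
  refine MonoidHom.eq_of_eqOn_denseM mclosure_isSwap ?_
  rintro _ ⟨i, j, hij, rfl⟩
  rcases eq_or_ne i o with rfl | hi
  · exact h j
  rcases eq_or_ne j o with rfl | hj
  · rw [swap_comm]; exact h i
  · rw [← swap_mul_swap_mul_swap hj hij.symm, swap_comm j o]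
    simp only [map_mul, h]

theorem mulAutConj_surjective_perm {α : Type*} [Finite α] (hα : Nat.card α ≠ 6) :
    Function.Surjective (MulAut.conj : Perm α →* MulAut (Perm α)) := by
  classical
  intro f
  have := Fintype.ofFinite α
  rcases isEmpty_or_nonempty α with _ | ⟨⟨o⟩⟩
  · exact ⟨1, MulEquiv.ext fun _ => Subsingleton.elim _ _⟩
  rw [Nat.card_eq_fintype_card] at hα
  obtain ⟨g, hg⟩ := exists_perm_map_swap_eq f (fun _ => isSwap_mulEquiv_apply hα f) o
  refine ⟨g, MulEquiv.toMonoidHom_injective (monoidHom_eq_of_swap_eq o fun i => ?_)⟩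
  exact ((hg i).trans (swap_apply_apply g o i)).symm

end SymmetricGroup

theorem rsc_representatives_symmetricGroup_general {G : Type*} [Group G]
    (hG : Function.Surjective (MulAut.conj : G →* MulAut G)) (r : ConjClasses G → ℕ)
    (u₀ : ConjClasses G → G) (hu₀ : ∀ C : ConjClasses G, ConjClasses.mk (u₀ C) = C) :
    (∀ A : RSC G, A.r = r → ∃ B : RSC G, B.r = r ∧ B.u = u₀ ∧ RSC.Iso A B) ∧
    (∀ A B : RSC G, A.r = r → B.r = r → A.u = u₀ → B.u = u₀ →
      (RSC.Iso A B ↔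
        ∀ C : ConjClasses G, r C ≠ 0 → ∀ ξ : Subgroup.centralizer {u₀ C} →* ℂˣ,
          Nat.card {i : Fin (A.r C) // ∀ (x : G) (hx : x ∈ Subgroup.centralizer {u₀ C})
            (hx' : x ∈ Subgroup.centralizer {A.u C}), A.chi C i ⟨x, hx'⟩ = ξ ⟨x, hx⟩} =
          Nat.card {j : Fin (B.r C) // ∀ (x : G) (hx : x ∈ Subgroup.centralizer {u₀ C})
            (hx' : x ∈ Subgroup.centralizer {B.u C}), B.chi C j ⟨x, hx'⟩ = ξ ⟨x, hx⟩})) ∧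
    Nonempty
      ((Quot fun A B : {A : RSC G // A.r = r} => RSC.Iso A.1 B.1) ≃
        {f : ∀ C : ConjClasses G, Multiset (Subgroup.centralizer {u₀ C} →* ℂˣ) //
          ∀ C, Multiset.card (f C) = r C}) := by
  refine ⟨?_, ?_, ?_⟩
  · rintro A rfl
    obtain ⟨B, hr, hu, hB⟩ :=
      RSC.exists_charMultiset_eq hu₀ (A.charMultiset hu₀) (A.card_charMultiset hu₀)
    exact ⟨B, hr, hu, RSC.iso_of_charMultiset_eq hu₀ hB.symm⟩
  · rintro A B rfl hr hA hB
    rw [RSC.iso_iff_charMultiset_eq hG hu₀ hr.symm,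
      RSC.charMultiset_eq_iff_card_eq hu₀ hA hB hr.symm]
  · let f (A : {A : RSC G // A.r = r}) :
        {f : ∀ C, Multiset (Subgroup.centralizer {u₀ C} →* ℂˣ) // ∀ C, (f C).card = r C} :=
      ⟨A.1.charMultiset hu₀, fun C => by rw [RSC.card_charMultiset, A.2]⟩
    have f_surjective : Function.Surjective f := fun ⟨m, hm⟩ =>
      have ⟨A, hr, _, hA⟩ := RSC.exists_charMultiset_eq hu₀ m hm
      ⟨⟨A, hr⟩, Subtype.ext hA⟩
    have iso_iff (A B : {A : RSC G // A.r = r}) : A.1.Iso B.1 ↔ f A = f B :=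
      (RSC.iso_iff_charMultiset_eq hG hu₀ (A.2.trans B.2.symm)).trans
        (Subtype.ext_iff (a1 := f A) (a2 := f B)).symm
    exact ⟨(Quot.congrRight iso_iff).trans (Setoid.quotientKerEquivOfSurjective f f_surjective)⟩

/-- Let `G = S_n` with `n` a positive integer, `n ≠ 6`, let `r` be a ramification of
`G`, and fix a map `u₀` from the conjugacy classes of `G` to `G` with `u₀(C) ∈ C` for
every class `C`.  Then: (a) every ramification system with characters with ramification
`r` is isomorphic to one of the form `RSC(G, r, χ⃗', u₀)`; (b) two systems
`RSC(G, r, χ⃗', u₀)` and `RSC(G, r, χ⃗'', u₀)` are isomorphic if and only if for each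
`C ∈ K_r(G)` the multisets `{χ'_C^{(i)}}` and `{χ''_C^{(i)}}` coincide (same number of
occurrences of each character `ξ` of `Z_{u₀(C)}`); consequently, (c) the isomorphism
classes of RSCs of `G` with ramification `r` are in bijection with the families,
indexed by the conjugacy classes, of multisets of characters of `Z_{u₀(C)}` of size
`r_C` (such a family carries information exactly at the classes `C ∈ K_r(G)`, since at
classes with `r_C = 0` the multiset is forced to be empty). -/
theorem rsc_representatives_symmetricGroup (n : ℕ) (hn : 0 < n) (h6 : n ≠ 6)
    (r : ConjClasses (Equiv.Perm (Fin n)) → ℕ)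
    (u₀ : ConjClasses (Equiv.Perm (Fin n)) → Equiv.Perm (Fin n))
    (hu₀ : ∀ C : ConjClasses (Equiv.Perm (Fin n)), ConjClasses.mk (u₀ C) = C) :
    (∀ A : RSC (Equiv.Perm (Fin n)), A.r = r →
      ∃ B : RSC (Equiv.Perm (Fin n)), B.r = r ∧ B.u = u₀ ∧ RSC.Iso A B) ∧
    (∀ A B : RSC (Equiv.Perm (Fin n)),
      A.r = r → B.r = r → A.u = u₀ → B.u = u₀ →
        (RSC.Iso A B ↔
          ∀ C : ConjClasses (Equiv.Perm (Fin n)), r C ≠ 0 →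
            ∀ ξ : Subgroup.centralizer ({u₀ C} : Set (Equiv.Perm (Fin n))) →* ℂˣ,
              Nat.card {i : Fin (A.r C) //
                ∀ (x : Equiv.Perm (Fin n))
                  (hx : x ∈ Subgroup.centralizer ({u₀ C} : Set (Equiv.Perm (Fin n))))
                  (hx' : x ∈ Subgroup.centralizer ({A.u C} : Set (Equiv.Perm (Fin n)))),
                  A.chi C i ⟨x, hx'⟩ = ξ ⟨x, hx⟩} =
              Nat.card {j : Fin (B.r C) //
                ∀ (x : Equiv.Perm (Fin n))
                  (hx : x ∈ Subgroup.centralizer ({u₀ C} : Set (Equiv.Perm (Fin n))))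
                  (hx' : x ∈ Subgroup.centralizer ({B.u C} : Set (Equiv.Perm (Fin n)))),
                  B.chi C j ⟨x, hx'⟩ = ξ ⟨x, hx⟩})) ∧
    Nonempty
      ((Quot fun A B : {A : RSC (Equiv.Perm (Fin n)) // A.r = r} =>
          RSC.Iso A.1 B.1) ≃
        {f : ∀ C : ConjClasses (Equiv.Perm (Fin n)),
            Multiset (Subgroup.centralizer ({u₀ C} : Set (Equiv.Perm (Fin n))) →* ℂˣ) //
          ∀ C, Multiset.card (f C) = r C}) :=
  rsc_representatives_symmetricGroup_general
    (mulAutConj_surjective_perm (by rwa [Nat.card_fin])) r u₀ hu₀
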